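/- (Maehara's lemma for G) In the calculus G, every partition Γ₁;Γ₂⇒Δ₁;Δ₂ of a derivable sequent Γ⇒Δ has a split-interpolant: there exists a formula C such that Γ₁⇒Δ₁,C and C,Γ₂⇒Δ₂ are derivable in G and L(C) ⊆ L(Γ₁,Δ₁) ∩ L(Γ₂,Δ₂). -/

import Mathlib

/-- Terms: variables or individual constants (no function symbols). -/
inductive Tm where
  | var : ℕ → Tm
  | const : ℕ → Tm
deriving DecidableEq

/-- First-order formulas over a language with denumerably many predicates,
a logical identity predicate, ⊥, ⊤, ∧, ∨, →, ∀, ∃. -/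
inductive Fm where
  | rel : ℕ → List Tm → Fm
  | eq : Tm → Tm → Fm
  | bot : Fm
  | top : Fm
  | and : Fm → Fm → Fm
  | or : Fm → Fm → Fm
  | imp : Fm → Fm → Fm
  | all : ℕ → Fm → Fm
  | ex : ℕ → Fm → Fm
deriving DecidableEq

def Fm.isAtom : Fm → Prop
  | .rel _ _ => True
  | .eq _ _ => True
  | .bot => True
  | .top => True
  | _ => False

/-- Ter(A): the free variables and individual constants of A, as terms. -/
def Fm.ter : Fm → Finset Tm
  | .rel _ ts => ts.toFinset
  | .eq a b => {a, b}
  | .bot => ∅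
  | .top => ∅
  | .and A B => A.ter ∪ B.ter
  | .or A B => A.ter ∪ B.ter
  | .imp A B => A.ter ∪ B.ter
  | .all x A => A.ter.erase (Tm.var x)
  | .ex x A => A.ter.erase (Tm.var x)

/-- Rel(A): the non-logical predicate symbols of A (identity, ⊥, ⊤ are logical). -/
def Fm.rels : Fm → Finset ℕ
  | .rel r _ => {r}
  | .eq _ _ => ∅
  | .bot => ∅
  | .top => ∅
  | .and A B => A.rels ∪ B.rels
  | .or A B => A.rels ∪ B.rels
  | .imp A B => A.rels ∪ B.rels
  | .all _ A => A.rels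
  | .ex _ A => A.rels

def Tm.consts : Tm → Finset ℕ
  | .var _ => ∅
  | .const c => {c}

/-- The individual constants occurring in A. -/
def Fm.consts : Fm → Finset ℕ
  | .rel _ ts => ts.foldr (fun t s => t.consts ∪ s) ∅
  | .eq a b => a.consts ∪ b.consts
  | .bot => ∅
  | .top => ∅
  | .and A B => A.consts ∪ B.consts
  | .or A B => A.consts ∪ B.consts
  | .imp A B => A.consts ∪ B.consts
  | .all _ A => A.consts
  | .ex _ A => A.consts

/-- L(A) = Ter(A) ∪ Rel(A). -/
def Fm.lang (A : Fm) : Finset (Tm ⊕ ℕ) :=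
  A.ter.image Sum.inl ∪ A.rels.image Sum.inr

/-- Ter of a multiset of formulas. -/
def terM (Γ : Multiset Fm) : Finset Tm := (Γ.map Fm.ter).sup

/-- L of a multiset of formulas. -/
def langM (Γ : Multiset Fm) : Finset (Tm ⊕ ℕ) := (Γ.map Fm.lang).sup

/-- s[t/u]: substitute the term t for the term u (a variable or a constant) in s. -/
def Tm.subst (s u t : Tm) : Tm := if s = u then t else s

/-- A[t/u]: substitute the term t for the term u in A (bound occurrences
of a variable u are not replaced). -/
def Fm.subst : Fm → Tm → Tm → Fm
  | .rel r ts, u, t => .rel r (ts.map (fun s => s.subst u t))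
  | .eq a b, u, t => .eq (a.subst u t) (b.subst u t)
  | .bot, _, _ => .bot
  | .top, _, _ => .top
  | .and A B, u, t => .and (A.subst u t) (B.subst u t)
  | .or A B, u, t => .or (A.subst u t) (B.subst u t)
  | .imp A B, u, t => .imp (A.subst u t) (B.subst u t)
  | .all x A, u, t => if u = Tm.var x then .all x A else .all x (A.subst u t)
  | .ex x A, u, t => if u = Tm.var x then .ex x A else .ex x (A.subst u t)

/-- t is free for u in A (no free occurrence of u is in the scope of a
quantifier binding the variable t, if t is a variable). -/
def Fm.freeFor (t u : Tm) : Fm → Prop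
  | .and A B => A.freeFor t u ∧ B.freeFor t u
  | .or A B => A.freeFor t u ∧ B.freeFor t u
  | .imp A B => A.freeFor t u ∧ B.freeFor t u
  | .all x A => u ∉ (Fm.all x A).ter ∨ (t ≠ Tm.var x ∧ A.freeFor t u)
  | .ex x A => u ∉ (Fm.ex x A).ter ∨ (t ≠ Tm.var x ∧ A.freeFor t u)
  | _ => True

/-- Simultaneous substitution of terms for variables (used on atoms). -/
def Tm.applyσ (σ : ℕ → Tm) : Tm → Tm
  | .var x => σ x
  | .const c => .const c

def Fm.applyσ (σ : ℕ → Tm) : Fm → Fm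
  | .rel r ts => .rel r (ts.map (Tm.applyσ σ))
  | .eq a b => .eq (a.applyσ σ) (b.applyσ σ)
  | .bot => .bot
  | .top => .top
  | .and A B => .and (A.applyσ σ) (B.applyσ σ)
  | .or A B => .or (A.applyσ σ) (B.applyσ σ)
  | .imp A B => .imp (A.applyσ σ) (B.applyσ σ)
  | .all x A => .all x (A.applyσ σ)
  | .ex x A => .ex x (A.applyσ σ)

/-- A geometric rule, given by its principal atoms P₁,…,Pₙ (with free
variables x̄) and, for each of its m ≥ 1 premises, an atom Qᵢ together with
its eigenvariable yᵢ. It corresponds to the geometric axiom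
∀x̄(P₁∧…∧Pₙ → ∃y₁Q₁ ∨ … ∨ ∃yₘQₘ). -/
structure GeomRule where
  Ps : List Fm
  QYs : List (Fm × ℕ)
  QYs_ne : QYs ≠ []
  atomP : ∀ P ∈ Ps, P.isAtom
  atomQ : ∀ q ∈ QYs, q.1.isAtom

/-- Rel of a list of formulas. -/
def relsL (L : List Fm) : Finset ℕ := L.foldr (fun A s => A.rels ∪ s) ∅

/-- A singular geometric rule: no individual constants occur in it, and (⋆):
at most one non-logical predicate occurs among the Qᵢ's and Pⱼ's, and every
non-logical predicate of the Qᵢ's occurs among the Pⱼ's. -/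
def GeomRule.Singular (R : GeomRule) : Prop :=
  (∀ P ∈ R.Ps, P.consts = ∅) ∧ (∀ q ∈ R.QYs, q.1.consts = ∅) ∧
  (relsL R.Ps ∪ relsL (R.QYs.map Prod.fst)).card ≤ 1 ∧
  relsL (R.QYs.map Prod.fst) ⊆ relsL R.Ps

/-- The instantiated principal atoms P₁[σ],…,Pₙ[σ] of a geometric rule. -/
def GeomRule.inst (R : GeomRule) (σ : ℕ → Tm) : Multiset Fm :=
  ((R.Ps.map (Fm.applyσ σ) : List Fm) : Multiset Fm)

/-- `DerG Rules n Γ Δ`: the sequent Γ⇒Δ has a derivation of height at most n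
in the calculus G3c extended with the geometric rules in `Rules`
(the plain calculus G is `DerG ∅`). -/
inductive DerG (Rules : Set GeomRule) : ℕ → Multiset Fm → Multiset Fm → Prop where
  | ax {n : ℕ} {P : Fm} {Γ Δ : Multiset Fm} (h : P.isAtom) :
      DerG Rules n (P ::ₘ Γ) (P ::ₘ Δ)
  | botL {n : ℕ} {Γ Δ : Multiset Fm} : DerG Rules n (Fm.bot ::ₘ Γ) Δ
  | topR {n : ℕ} {Γ Δ : Multiset Fm} : DerG Rules n Γ (Fm.top ::ₘ Δ)
  | andL {n : ℕ} {A B : Fm} {Γ Δ : Multiset Fm} :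
      DerG Rules n (A ::ₘ B ::ₘ Γ) Δ → DerG Rules (n + 1) (Fm.and A B ::ₘ Γ) Δ
  | andR {n : ℕ} {A B : Fm} {Γ Δ : Multiset Fm} :
      DerG Rules n Γ (A ::ₘ Δ) → DerG Rules n Γ (B ::ₘ Δ) →
      DerG Rules (n + 1) Γ (Fm.and A B ::ₘ Δ)
  | orL {n : ℕ} {A B : Fm} {Γ Δ : Multiset Fm} :
      DerG Rules n (A ::ₘ Γ) Δ → DerG Rules n (B ::ₘ Γ) Δ →
      DerG Rules (n + 1) (Fm.or A B ::ₘ Γ) Δ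
  | orR {n : ℕ} {A B : Fm} {Γ Δ : Multiset Fm} :
      DerG Rules n Γ (A ::ₘ B ::ₘ Δ) → DerG Rules (n + 1) Γ (Fm.or A B ::ₘ Δ)
  | impL {n : ℕ} {A B : Fm} {Γ Δ : Multiset Fm} :
      DerG Rules n Γ (A ::ₘ Δ) → DerG Rules n (B ::ₘ Γ) Δ →
      DerG Rules (n + 1) (Fm.imp A B ::ₘ Γ) Δ
  | impR {n : ℕ} {A B : Fm} {Γ Δ : Multiset Fm} :
      DerG Rules n (A ::ₘ Γ) (B ::ₘ Δ) → DerG Rules (n + 1) Γ (Fm.imp A B ::ₘ Δ)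
  | allL {n : ℕ} {x : ℕ} {A : Fm} {t : Tm} {Γ Δ : Multiset Fm}
      (hfree : A.freeFor t (Tm.var x)) :
      DerG Rules n (A.subst (Tm.var x) t ::ₘ Fm.all x A ::ₘ Γ) Δ →
      DerG Rules (n + 1) (Fm.all x A ::ₘ Γ) Δ
  | allR {n : ℕ} {x y : ℕ} {A : Fm} {Γ Δ : Multiset Fm}
      (hfree : A.freeFor (Tm.var y) (Tm.var x))
      (hy : Tm.var y ∉ terM Γ ∪ terM Δ ∪ (Fm.all x A).ter) :
      DerG Rules n Γ (A.subst (Tm.var x) (Tm.var y) ::ₘ Δ) →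
      DerG Rules (n + 1) Γ (Fm.all x A ::ₘ Δ)
  | exL {n : ℕ} {x y : ℕ} {A : Fm} {Γ Δ : Multiset Fm}
      (hfree : A.freeFor (Tm.var y) (Tm.var x))
      (hy : Tm.var y ∉ terM Γ ∪ terM Δ ∪ (Fm.ex x A).ter) :
      DerG Rules n (A.subst (Tm.var x) (Tm.var y) ::ₘ Γ) Δ →
      DerG Rules (n + 1) (Fm.ex x A ::ₘ Γ) Δ
  | exR {n : ℕ} {x : ℕ} {A : Fm} {t : Tm} {Γ Δ : Multiset Fm}
      (hfree : A.freeFor t (Tm.var x)) :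
      DerG Rules n Γ (Fm.ex x A ::ₘ A.subst (Tm.var x) t ::ₘ Δ) →
      DerG Rules (n + 1) Γ (Fm.ex x A ::ₘ Δ)
  | geom {n : ℕ} {R : GeomRule} {σ : ℕ → Tm} {Γ Δ : Multiset Fm} (hR : R ∈ Rules)
      (hfresh : ∀ q ∈ R.QYs, ∃ z : ℕ, σ q.2 = Tm.var z ∧
          Tm.var z ∉ terM (R.inst σ + Γ) ∪ terM Δ)
      (hprem : ∀ q ∈ R.QYs, DerG Rules n (Fm.applyσ σ q.1 ::ₘ (R.inst σ + Γ)) Δ) :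
      DerG Rules (n + 1) (R.inst σ + Γ) Δ

/-- Γ⇒Δ is derivable in G + Rules. -/
def Derivable (Rules : Set GeomRule) (Γ Δ : Multiset Fm) : Prop :=
  ∃ n, DerG Rules n Γ Δ

/-- C is a split-interpolant of the partition Γ₁;Γ₂⇒Δ₁;Δ₂ in G + Rules. -/
def SplitInterpolant (Rules : Set GeomRule) (Γ₁ Γ₂ Δ₁ Δ₂ : Multiset Fm) (C : Fm) : Prop :=
  Derivable Rules Γ₁ (C ::ₘ Δ₁) ∧ Derivable Rules (C ::ₘ Γ₂) Δ₂ ∧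
  C.lang ⊆ langM (Γ₁ + Δ₁) ∩ langM (Γ₂ + Δ₂)
/-- Disjunction C₁ ∨ … ∨ Cₘ of a list of formulas. -/
def disj : List Fm → Fm
  | [] => Fm.bot
  | [C] => C
  | C :: L => Fm.or C (disj L)

/-- Conjunction C₁ ∧ … ∧ Cₘ of a list of formulas. -/
def conj : List Fm → Fm
  | [] => Fm.top
  | [C] => C
  | C :: L => Fm.and C (conj L)

/-- A[z̄/t̄]: successively substitute the variable zᵢ for the term tᵢ. -/
def Fm.substPairs : Fm → List (Tm × ℕ) → Fm
  | A, [] => A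
  | A, (t, z) :: L => (A.subst t (Tm.var z)).substPairs L

/-- ∀z̄ A. -/
def foralls (zs : List ℕ) (A : Fm) : Fm := zs.foldr Fm.all A

/-- ∃z̄ A. -/
def exs (zs : List ℕ) (A : Fm) : Fm := zs.foldr Fm.ex A
namespace Mae

/-- Bound variables (as terms). -/
def bv : Fm → Finset Tm
  | .rel _ _ => ∅
  | .eq _ _ => ∅
  | .bot => ∅
  | .top => ∅
  | .and A B => bv A ∪ bv B
  | .or A B => bv A ∪ bv B
  | .imp A B => bv A ∪ bv B
  | .all x A => insert (Tm.var x) (bv A)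
  | .ex x A => insert (Tm.var x) (bv A)

/-- Simultaneous (naive) substitution. -/
def sub : Fm → (Tm → Tm) → Fm
  | .rel r ts, σ => .rel r (ts.map σ)
  | .eq a b, σ => .eq (σ a) (σ b)
  | .bot, _ => .bot
  | .top, _ => .top
  | .and A B, σ => .and (sub A σ) (sub B σ)
  | .or A B, σ => .or (sub A σ) (sub B σ)
  | .imp A B, σ => .imp (sub A σ) (sub B σ)
  | .all x A, σ => .all x (sub A (Function.update σ (Tm.var x) (Tm.var x)))
  | .ex x A, σ => .ex x (sub A (Function.update σ (Tm.var x) (Tm.var x)))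

/-- No capture. -/
def NC : Fm → (Tm → Tm) → Prop
  | .and A B, σ => NC A σ ∧ NC B σ
  | .or A B, σ => NC A σ ∧ NC B σ
  | .imp A B, σ => NC A σ ∧ NC B σ
  | .all x A, σ => (∀ s ∈ A.ter, s ≠ Tm.var x → σ s ≠ Tm.var x) ∧
      NC A (Function.update σ (Tm.var x) (Tm.var x))
  | .ex x A, σ => (∀ s ∈ A.ter, s ≠ Tm.var x → σ s ≠ Tm.var x) ∧
      NC A (Function.update σ (Tm.var x) (Tm.var x))
  | _, _ => True

theorem sub_congr (A : Fm) : ∀ (σ τ : Tm → Tm), (∀ s ∈ A.ter, σ s = τ s) → sub A σ = sub A τ := by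
  induction A with
  | rel r ts => intro σ τ h; simp [Fm.ter] at h; simpa [sub] using h
  | eq a b => intro σ τ h; simp [Fm.ter] at h; simp [sub, h]
  | bot => intros; rfl
  | top => intros; rfl
  | and A B iA iB | or A B iA iB | imp A B iA iB =>
    intro σ τ h; simp only [Fm.ter, Finset.mem_union] at h
    simp only [sub]; rw [iA σ τ fun s hs => h s (Or.inl hs), iB σ τ fun s hs => h s (Or.inr hs)]
  | all x A iA | ex x A iA =>
    intro σ τ h; simp only [Fm.ter, Finset.mem_erase] at h
    simp only [sub]; rw [iA _ (Function.update τ (Tm.var x) (Tm.var x))]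
    intro s hs
    by_cases e : s = Tm.var x
    · subst e; simp
    · simp [Function.update_of_ne e, h s ⟨e, hs⟩]

theorem sub_id (A : Fm) : sub A id = A := by
  have key : ∀ x, Function.update (id : Tm → Tm) (Tm.var x) (Tm.var x) = id := fun x =>
    Function.update_eq_self (Tm.var x) id
  induction A with
  | rel r ts => simp [sub]
  | all x A iA | ex x A iA => simp only [sub]; rw [key, iA]
  | _ => simp_all [sub]

theorem sub_fix (A : Fm) (σ : Tm → Tm) (h : ∀ s ∈ A.ter, σ s = s) : sub A σ = A := by
  rw [sub_congr A σ id h, sub_id]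

theorem upd_eq {u t : Tm} {x : ℕ} (h : u ≠ Tm.var x) :
    Function.update (Function.update id u t) (Tm.var x) (Tm.var x) = Function.update id u t := by
  funext s; simp only [Function.update_apply, id]; grind

theorem upd_eq' {t : Tm} {x : ℕ} :
    Function.update (Function.update id (Tm.var x) t) (Tm.var x) (Tm.var x) = id := by
  funext s; simp only [Function.update_apply, id]; grind

theorem tsubst (s u t : Tm) : s.subst u t = Function.update id u t s := by
  simp [Tm.subst, Function.update_apply]

theorem subst_eq_sub (A : Fm) (u t : Tm) : A.subst u t = sub A (Function.update id u t) := by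
  induction A with
  | rel r ts => simp [sub, Fm.subst, tsubst]
  | eq a b => simp [sub, Fm.subst, tsubst]
  | bot => rfl
  | top => rfl
  | and A B iA iB | or A B iA iB | imp A B iA iB => simp [sub, Fm.subst, iA, iB]
  | all x A iA | ex x A iA =>
    simp only [sub, Fm.subst]
    split_ifs with h
    · subst h; rw [upd_eq', sub_id]
    · rw [upd_eq h, iA]

theorem bv_sub (A : Fm) : ∀ σ, bv (sub A σ) = bv A := by
  induction A <;> simp_all [sub, bv]

theorem ter_sub (A : Fm) : ∀ σ s', s' ∈ (sub A σ).ter → ∃ s ∈ A.ter, σ s = s' := by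
  induction A with
  | rel r ts => intro σ s' h; simpa [sub, Fm.ter] using h
  | eq a b => intro σ s' h; simp [sub, Fm.ter] at h ⊢; grind
  | bot => intro σ s' h; simp [sub, Fm.ter] at h
  | top => intro σ s' h; simp [sub, Fm.ter] at h
  | and A B iA iB | or A B iA iB | imp A B iA iB =>
    intro σ s' h; simp only [sub, Fm.ter, Finset.mem_union] at h ⊢
    grind
  | all x A iA | ex x A iA =>
    intro σ s' h; simp only [sub, Fm.ter, Finset.mem_erase] at h ⊢
    obtain ⟨s, hs, e⟩ := iA _ _ h.2
    rw [Function.update_apply] at e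
    grind

theorem rels_sub (A : Fm) : ∀ σ, (sub A σ).rels = A.rels := by
  induction A <;> simp_all [sub, Fm.rels]

theorem sub_sub (A : Fm) : ∀ σ τ, NC A τ → sub (sub A τ) σ = sub A (σ ∘ τ) := by
  induction A with
  | rel r ts => intros; simp [sub]
  | eq a b => intros; simp [sub]
  | bot => intros; rfl
  | top => intros; rfl
  | and A B iA iB | or A B iA iB | imp A B iA iB =>
    intro σ τ h; simp only [sub]; rw [iA _ _ h.1, iB _ _ h.2]
  | all x A iA | ex x A iA =>
    intro σ τ h; simp only [sub]; rw [iA _ _ h.2]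
    congr 1
    apply sub_congr
    intro s hs
    by_cases e : s = Tm.var x
    · subst e; simp
    · simp [Function.update_of_ne e, Function.update_of_ne (h.1 s hs e)]

theorem NC_of_ok (A : Fm) : ∀ σ, (∀ s, σ s = s ∨ σ s ∉ bv A) → NC A σ := by
  induction A with
  | rel r ts => intros; trivial
  | eq a b => intros; trivial
  | bot => intros; trivial
  | top => intros; trivial
  | and A B iA iB | or A B iA iB | imp A B iA iB =>
    intro σ h; simp only [bv, Finset.mem_union] at h
    exact ⟨iA _ (by grind), iB _ (by grind)⟩
  | all x A iA | ex x A iA =>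
    intro σ h; simp only [bv, Finset.mem_insert] at h
    refine ⟨by grind, iA _ ?_⟩
    intro s; rw [Function.update_apply]; grind

theorem NC_congr (A : Fm) : ∀ (σ τ : Tm → Tm), (∀ s ∈ A.ter, σ s = τ s) → NC A σ → NC A τ := by
  induction A with
  | rel r ts => intros; trivial
  | eq a b => intros; trivial
  | bot => intros; trivial
  | top => intros; trivial
  | and A B iA iB | or A B iA iB | imp A B iA iB =>
    intro σ τ h; simp only [Fm.ter, Finset.mem_union] at h
    exact fun h' => ⟨iA σ τ (by grind) h'.1, iB σ τ (by grind) h'.2⟩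
  | all x A iA | ex x A iA =>
    intro σ τ h h'; simp only [Fm.ter, Finset.mem_erase] at h
    refine ⟨fun s hs e => ?_, iA _ _ ?_ h'.2⟩
    · rw [← h s ⟨e, hs⟩]; exact h'.1 s hs e
    · intro s hs
      simp only [Function.update_apply]; grind

theorem NC_id (A : Fm) : NC A id := NC_of_ok A id (fun _ => Or.inl rfl)

theorem NC_of_freeFor (A : Fm) (t u : Tm) : A.freeFor t u → NC A (Function.update id u t) := by
  induction A with
  | rel r ts => intros; trivial
  | eq a b => intros; trivial
  | bot => intros; trivial
  | top => intros; trivial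
  | and A B iA iB | or A B iA iB | imp A B iA iB => exact fun h => ⟨iA h.1, iB h.2⟩
  | all x A iA | ex x A iA =>
    intro h
    rcases h with h | ⟨h1, h2⟩
    · refine NC_congr _ id _ ?_ (NC_id _)
      intro s hs
      rw [Function.update_apply]; grind
    · by_cases e : u = Tm.var x
      · subst e
        refine ⟨fun s hs e => by simp [Function.update_of_ne e, e], ?_⟩
        rw [upd_eq']; exact NC_id _
      · refine ⟨fun s hs e => ?_, ?_⟩
        · rw [Function.update_apply]; grind
        · rw [upd_eq e]; exact iA h2

theorem freeFor_of_bv (A : Fm) (t u : Tm) : t ∉ bv A → A.freeFor t u := by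
  induction A with
  | rel r ts => intros; trivial
  | eq a b => intros; trivial
  | bot => intros; trivial
  | top => intros; trivial
  | and A B iA iB | or A B iA iB | imp A B iA iB =>
    intro h; simp only [bv, Finset.mem_union] at h
    exact ⟨iA (by grind), iB (by grind)⟩
  | all x A iA | ex x A iA =>
    intro h; simp only [bv, Finset.mem_insert] at h
    exact Or.inr ⟨by grind, iA (by grind)⟩

theorem freeFor_sub (A : Fm) (t u : Tm) : ∀ σ : Tm → Tm, (∀ s, σ s = u → s = u) →
    A.freeFor t u → (sub A σ).freeFor t u := by
  induction A with
  | rel r ts => intros; trivial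
  | eq a b => intros; trivial
  | bot => intros; trivial
  | top => intros; trivial
  | and A B iA iB | or A B iA iB | imp A B iA iB =>
    intro σ h h'; exact ⟨iA σ h h'.1, iB σ h h'.2⟩
  | all x A iA | ex x A iA =>
    intro σ h h'
    rcases h' with h' | ⟨h1, h2⟩
    · left
      intro hm
      simp only [Fm.ter, Finset.mem_erase] at hm h'
      obtain ⟨s, hs, e⟩ := ter_sub _ _ u hm.2
      rw [Function.update_apply] at e
      grind
    · refine Or.inr ⟨h1, iA _ ?_ h2⟩
      intro s; rw [Function.update_apply]; grind

theorem freeFor_back (A : Fm) (t z : Tm) : z ∉ bv A → z ∉ A.ter →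
    (A.subst t z).freeFor t z := by
  induction A with
  | rel r ts => intros; trivial
  | eq a b => intros; trivial
  | bot => intros; trivial
  | top => intros; trivial
  | and A B iA iB | or A B iA iB | imp A B iA iB =>
    intro h h'; simp only [bv, Fm.ter, Finset.mem_union] at h h'
    exact ⟨iA (by grind) (by grind), iB (by grind) (by grind)⟩
  | all x A iA | ex x A iA =>
    intro h h'
    simp only [Fm.subst]
    split_ifs with e
    · exact Or.inl h'
    · simp only [bv, Fm.ter, Finset.mem_insert, Finset.mem_erase] at h h'
      exact Or.inr ⟨e, iA (by grind) (by grind)⟩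

/-- key commutation -/
theorem sub_subst (A : Fm) (x : ℕ) (t : Tm) (σ : Tm → Tm) (hf : A.freeFor t (Tm.var x))
    (ok : ∀ s, σ s = s ∨ (σ s ≠ Tm.var x ∧ σ s ∉ bv A)) :
    sub (A.subst (Tm.var x) t) σ =
      (sub A (Function.update σ (Tm.var x) (Tm.var x))).subst (Tm.var x) (σ t) := by
  rw [subst_eq_sub, subst_eq_sub, sub_sub _ _ _ (NC_of_freeFor _ _ _ hf), sub_sub]
  · apply sub_congr
    intro s _
    simp only [Function.comp, Function.update_apply, id]
    grind
  · apply NC_of_ok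
    intro s; rw [Function.update_apply]; grind

theorem sub_freeFor (A : Fm) (x : ℕ) (t : Tm) (σ : Tm → Tm) (hf : A.freeFor t (Tm.var x))
    (ok : ∀ s, σ s = s ∨ (σ s ≠ Tm.var x ∧ σ s ∉ bv A)) :
    (sub A (Function.update σ (Tm.var x) (Tm.var x))).freeFor (σ t) (Tm.var x) := by
  rcases ok t with h | h
  · rw [h]
    apply freeFor_sub _ _ _ _ _ hf
    intro s; rw [Function.update_apply]; grind
  · apply freeFor_of_bv; rw [bv_sub]; exact h.2

inductive D : Multiset Fm → Multiset Fm → Prop where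
  | ax {P : Fm} {Γ Δ : Multiset Fm} (h : P.isAtom) : D (P ::ₘ Γ) (P ::ₘ Δ)
  | botL {Γ Δ : Multiset Fm} : D (Fm.bot ::ₘ Γ) Δ
  | topR {Γ Δ : Multiset Fm} : D Γ (Fm.top ::ₘ Δ)
  | andL {A B : Fm} {Γ Δ : Multiset Fm} : D (A ::ₘ B ::ₘ Γ) Δ → D (Fm.and A B ::ₘ Γ) Δ
  | andR {A B : Fm} {Γ Δ : Multiset Fm} :
      D Γ (A ::ₘ Δ) → D Γ (B ::ₘ Δ) → D Γ (Fm.and A B ::ₘ Δ)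
  | orL {A B : Fm} {Γ Δ : Multiset Fm} :
      D (A ::ₘ Γ) Δ → D (B ::ₘ Γ) Δ → D (Fm.or A B ::ₘ Γ) Δ
  | orR {A B : Fm} {Γ Δ : Multiset Fm} : D Γ (A ::ₘ B ::ₘ Δ) → D Γ (Fm.or A B ::ₘ Δ)
  | impL {A B : Fm} {Γ Δ : Multiset Fm} :
      D Γ (A ::ₘ Δ) → D (B ::ₘ Γ) Δ → D (Fm.imp A B ::ₘ Γ) Δ
  | impR {A B : Fm} {Γ Δ : Multiset Fm} : D (A ::ₘ Γ) (B ::ₘ Δ) → D Γ (Fm.imp A B ::ₘ Δ)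
  | allL {x : ℕ} {A : Fm} {t : Tm} {Γ Δ : Multiset Fm} (hfree : A.freeFor t (Tm.var x)) :
      D (A.subst (Tm.var x) t ::ₘ Fm.all x A ::ₘ Γ) Δ → D (Fm.all x A ::ₘ Γ) Δ
  | allR {x y : ℕ} {A : Fm} {Γ Δ : Multiset Fm}
      (hfree : A.freeFor (Tm.var y) (Tm.var x))
      (h1 : ∀ F ∈ Γ, Tm.var y ∉ F.ter) (h2 : ∀ F ∈ Δ, Tm.var y ∉ F.ter)
      (h3 : Tm.var y ∉ (Fm.all x A).ter) :
      D Γ (A.subst (Tm.var x) (Tm.var y) ::ₘ Δ) → D Γ (Fm.all x A ::ₘ Δ)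
  | exL {x y : ℕ} {A : Fm} {Γ Δ : Multiset Fm}
      (hfree : A.freeFor (Tm.var y) (Tm.var x))
      (h1 : ∀ F ∈ Γ, Tm.var y ∉ F.ter) (h2 : ∀ F ∈ Δ, Tm.var y ∉ F.ter)
      (h3 : Tm.var y ∉ (Fm.ex x A).ter) :
      D (A.subst (Tm.var x) (Tm.var y) ::ₘ Γ) Δ → D (Fm.ex x A ::ₘ Γ) Δ
  | exR {x : ℕ} {A : Fm} {t : Tm} {Γ Δ : Multiset Fm} (hfree : A.freeFor t (Tm.var x)) :
      D Γ (Fm.ex x A ::ₘ A.subst (Tm.var x) t ::ₘ Δ) → D Γ (Fm.ex x A ::ₘ Δ)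

theorem mem_terM (Γ : Multiset Fm) (t : Tm) : t ∈ terM Γ ↔ ∃ F ∈ Γ, t ∈ F.ter := by
  induction Γ using Multiset.induction with
  | empty => simp [terM]
  | cons A Γ ih =>
    have : terM (A ::ₘ Γ) = A.ter ∪ terM Γ := by simp [terM]
    simp [this, ih]

theorem mem_langM (Γ : Multiset Fm) (w : Tm ⊕ ℕ) : w ∈ langM Γ ↔ ∃ F ∈ Γ, w ∈ F.lang := by
  induction Γ using Multiset.induction with
  | empty => simp [langM]
  | cons A Γ ih =>
    have : langM (A ::ₘ Γ) = A.lang ∪ langM Γ := by simp [langM]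
    simp [this, ih]

theorem mono {n : ℕ} {Γ Δ : Multiset Fm} (h : DerG ∅ n Γ Δ) : ∀ m, n ≤ m → DerG ∅ m Γ Δ := by
  induction h with
  | ax h => intros; exact .ax h
  | botL => intros; exact .botL
  | topR => intros; exact .topR
  | geom hR => exact absurd hR (by simp)
  | andL _ ih => intro m hm; obtain ⟨k, rfl⟩ : ∃ k, m = k + 1 := ⟨m - 1, by omega⟩
                 exact .andL (ih k (by omega))
  | orR _ ih => intro m hm; obtain ⟨k, rfl⟩ : ∃ k, m = k + 1 := ⟨m - 1, by omega⟩
                exact .orR (ih k (by omega))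
  | impR _ ih => intro m hm; obtain ⟨k, rfl⟩ : ∃ k, m = k + 1 := ⟨m - 1, by omega⟩
                 exact .impR (ih k (by omega))
  | andR _ _ ih ih' => intro m hm; obtain ⟨k, rfl⟩ : ∃ k, m = k + 1 := ⟨m - 1, by omega⟩
                       exact .andR (ih k (by omega)) (ih' k (by omega))
  | orL _ _ ih ih' => intro m hm; obtain ⟨k, rfl⟩ : ∃ k, m = k + 1 := ⟨m - 1, by omega⟩
                      exact .orL (ih k (by omega)) (ih' k (by omega))
  | impL _ _ ih ih' => intro m hm; obtain ⟨k, rfl⟩ : ∃ k, m = k + 1 := ⟨m - 1, by omega⟩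
                       exact .impL (ih k (by omega)) (ih' k (by omega))
  | allL hf _ ih => intro m hm; obtain ⟨k, rfl⟩ : ∃ k, m = k + 1 := ⟨m - 1, by omega⟩
                    exact .allL hf (ih k (by omega))
  | exR hf _ ih => intro m hm; obtain ⟨k, rfl⟩ : ∃ k, m = k + 1 := ⟨m - 1, by omega⟩
                   exact .exR hf (ih k (by omega))
  | allR hf hy _ ih => intro m hm; obtain ⟨k, rfl⟩ : ∃ k, m = k + 1 := ⟨m - 1, by omega⟩
                       exact .allR hf hy (ih k (by omega))
  | exL hf hy _ ih => intro m hm; obtain ⟨k, rfl⟩ : ∃ k, m = k + 1 := ⟨m - 1, by omega⟩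
                      exact .exL hf hy (ih k (by omega))

theorem D_of {n : ℕ} {Γ Δ : Multiset Fm} (h : DerG ∅ n Γ Δ) : D Γ Δ := by
  induction h with
  | ax h => exact .ax h
  | botL => exact .botL
  | topR => exact .topR
  | geom hR => exact absurd hR (by simp)
  | andL _ ih => exact .andL ih
  | orR _ ih => exact .orR ih
  | impR _ ih => exact .impR ih
  | andR _ _ ih ih' => exact .andR ih ih'
  | orL _ _ ih ih' => exact .orL ih ih'
  | impL _ _ ih ih' => exact .impL ih ih'
  | allL hf _ ih => exact .allL hf ih
  | exR hf _ ih => exact .exR hf ih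
  | allR hf hy _ ih =>
    simp only [Finset.mem_union, mem_terM, not_or, not_exists, not_and] at hy
    exact .allR hf hy.1.1 hy.1.2 hy.2 ih
  | exL hf hy _ ih =>
    simp only [Finset.mem_union, mem_terM, not_or, not_exists, not_and] at hy
    exact .exL hf hy.1.1 hy.1.2 hy.2 ih

theorem of_D {Γ Δ : Multiset Fm} (h : D Γ Δ) : Derivable ∅ Γ Δ := by
  induction h with
  | ax h => exact ⟨0, .ax h⟩
  | botL => exact ⟨0, .botL⟩
  | topR => exact ⟨0, .topR⟩
  | andL _ ih => exact ⟨_, .andL ih.choose_spec⟩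
  | orR _ ih => exact ⟨_, .orR ih.choose_spec⟩
  | impR _ ih => exact ⟨_, .impR ih.choose_spec⟩
  | andR _ _ ih ih' =>
    obtain ⟨n, h⟩ := ih; obtain ⟨m, h'⟩ := ih'
    exact ⟨_, .andR (mono h (n + m) (by omega)) (mono h' (n + m) (by omega))⟩
  | orL _ _ ih ih' =>
    obtain ⟨n, h⟩ := ih; obtain ⟨m, h'⟩ := ih'
    exact ⟨_, .orL (mono h (n + m) (by omega)) (mono h' (n + m) (by omega))⟩
  | impL _ _ ih ih' =>
    obtain ⟨n, h⟩ := ih; obtain ⟨m, h'⟩ := ih'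
    exact ⟨_, .impL (mono h (n + m) (by omega)) (mono h' (n + m) (by omega))⟩
  | allL hf _ ih => exact ⟨_, .allL hf ih.choose_spec⟩
  | exR hf _ ih => exact ⟨_, .exR hf ih.choose_spec⟩
  | allR hf h1 h2 h3 _ ih =>
    refine ⟨_, .allR hf ?_ ih.choose_spec⟩
    simp only [Finset.mem_union, mem_terM, not_or, not_exists, not_and]
    exact ⟨⟨h1, h2⟩, h3⟩
  | exL hf h1 h2 h3 _ ih =>
    refine ⟨_, .exL hf ?_ ih.choose_spec⟩
    simp only [Finset.mem_union, mem_terM, not_or, not_exists, not_and]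
    exact ⟨⟨h1, h2⟩, h3⟩

theorem fresh (S : Finset Tm) : ∃ y, Tm.var y ∉ S := by
  have inj : Function.Injective Tm.var := fun a b h => by cases h; rfl
  obtain ⟨y, hy⟩ := Infinite.exists_notMem_finset (S.preimage Tm.var inj.injOn)
  exact ⟨y, by simpa using hy⟩

theorem isAtom_sub {P : Fm} (σ) (h : P.isAtom) : (sub P σ).isAtom := by
  cases P <;> simp_all [sub, Fm.isAtom]

theorem bv_subst (A : Fm) (u t : Tm) : bv (A.subst u t) = bv A := by
  rw [subst_eq_sub, bv_sub]

theorem map_sub_congr {Γ : Multiset Fm} {σ τ : Tm → Tm} (h : ∀ F ∈ Γ, ∀ s ∈ F.ter, σ s = τ s) :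
    Γ.map (sub · σ) = Γ.map (sub · τ) :=
  Multiset.map_congr rfl fun F hF => sub_congr F _ _ (h F hF)

theorem ren (B : Finset Tm) {Γ Δ : Multiset Fm} (h : D Γ Δ) : ∀ (σ : Tm → Tm),
    (∀ F ∈ Γ, bv F ⊆ B) → (∀ F ∈ Δ, bv F ⊆ B) → (∀ s, σ s = s ∨ σ s ∉ B) →
    ∀ Γ' Δ' : Multiset Fm, D (Γ.map (sub · σ) + Γ') (Δ.map (sub · σ) + Δ') := by
  induction h with
  | ax h =>
    intro σ _ _ _ Γ' Δ'; simp only [Multiset.map_cons, Multiset.cons_add]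
    exact .ax (isAtom_sub σ h)
  | botL => intro σ _ _ _ Γ' Δ'; simp only [Multiset.map_cons, Multiset.cons_add]; exact .botL
  | topR => intro σ _ _ _ Γ' Δ'; simp only [Multiset.map_cons, Multiset.cons_add]; exact .topR
  | andL _ ih =>
    intro σ h1 h2 ok Γ' Δ'
    simp only [Multiset.mem_cons, forall_eq_or_imp, bv, Finset.union_subset_iff] at h1 h2 ih
    simp only [Multiset.map_cons, Multiset.cons_add] at ih ⊢
    exact .andL (ih σ (by tauto) (by tauto) ok Γ' Δ')
  | orR _ ih =>
    intro σ h1 h2 ok Γ' Δ'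
    simp only [Multiset.mem_cons, forall_eq_or_imp, bv, Finset.union_subset_iff] at h1 h2 ih
    simp only [Multiset.map_cons, Multiset.cons_add] at ih ⊢
    exact .orR (ih σ (by tauto) (by tauto) ok Γ' Δ')
  | impR _ ih =>
    intro σ h1 h2 ok Γ' Δ'
    simp only [Multiset.mem_cons, forall_eq_or_imp, bv, Finset.union_subset_iff] at h1 h2 ih
    simp only [Multiset.map_cons, Multiset.cons_add] at ih ⊢
    exact .impR (ih σ (by tauto) (by tauto) ok Γ' Δ')
  | andR _ _ ih ih' =>
    intro σ h1 h2 ok Γ' Δ'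
    simp only [Multiset.mem_cons, forall_eq_or_imp, bv, Finset.union_subset_iff] at h1 h2 ih ih'
    simp only [Multiset.map_cons, Multiset.cons_add] at ih ih' ⊢
    exact .andR (ih σ (by tauto) (by tauto) ok Γ' Δ') (ih' σ (by tauto) (by tauto) ok Γ' Δ')
  | orL _ _ ih ih' =>
    intro σ h1 h2 ok Γ' Δ'
    simp only [Multiset.mem_cons, forall_eq_or_imp, bv, Finset.union_subset_iff] at h1 h2 ih ih'
    simp only [Multiset.map_cons, Multiset.cons_add] at ih ih' ⊢
    exact .orL (ih σ (by tauto) (by tauto) ok Γ' Δ') (ih' σ (by tauto) (by tauto) ok Γ' Δ')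
  | impL _ _ ih ih' =>
    intro σ h1 h2 ok Γ' Δ'
    simp only [Multiset.mem_cons, forall_eq_or_imp, bv, Finset.union_subset_iff] at h1 h2 ih ih'
    simp only [Multiset.map_cons, Multiset.cons_add] at ih ih' ⊢
    exact .impL (ih σ (by tauto) (by tauto) ok Γ' Δ') (ih' σ (by tauto) (by tauto) ok Γ' Δ')
  | @allL x A t Γ Δ hf _ ih =>
    intro σ h1 h2 ok Γ' Δ'
    simp only [Multiset.mem_cons, forall_eq_or_imp, bv, bv_subst, Finset.insert_subset_iff] at h1 h2 ih
    have ok' : ∀ s, σ s = s ∨ (σ s ≠ Tm.var x ∧ σ s ∉ bv A) := by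
      intro s; have := ok s; have := @h1.1.2 (σ s); grind
    have := ih σ (by tauto) (by tauto) ok Γ' Δ'
    simp only [Multiset.map_cons, Multiset.cons_add, sub_subst A x t σ hf ok'] at this ⊢
    exact .allL (sub_freeFor A x t σ hf ok') this
  | @exR x A t Γ Δ hf _ ih =>
    intro σ h1 h2 ok Γ' Δ'
    simp only [Multiset.mem_cons, forall_eq_or_imp, bv, bv_subst, Finset.insert_subset_iff] at h1 h2 ih
    have ok' : ∀ s, σ s = s ∨ (σ s ≠ Tm.var x ∧ σ s ∉ bv A) := by
      intro s; have := ok s; have := @h2.1.2 (σ s); grind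
    have := ih σ (by tauto) (by tauto) ok Γ' Δ'
    simp only [Multiset.map_cons, Multiset.cons_add, sub_subst A x t σ hf ok'] at this ⊢
    exact .exR (sub_freeFor A x t σ hf ok') this
  | @allR x y A Γ Δ hf e1 e2 e3 _ ih =>
    intro σ h1 h2 ok Γ' Δ'
    simp only [Multiset.mem_cons, forall_eq_or_imp, bv, bv_subst, Finset.insert_subset_iff] at h1 h2 ih
    obtain ⟨y', hy'⟩ := fresh (B ∪ terM (Γ.map (sub · σ) + Γ') ∪ terM (Δ.map (sub · σ) + Δ') ∪
      (sub (Fm.all x A) σ).ter)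
    simp only [Finset.mem_union, mem_terM, not_or, not_exists, not_and] at hy'
    obtain ⟨⟨⟨f0, f1⟩, f2⟩, f3⟩ := hy'
    have okσ : ∀ s, Function.update σ (Tm.var y) (Tm.var y') s = s ∨
        Function.update σ (Tm.var y) (Tm.var y') s ∉ B := by
      intro s; rw [Function.update_apply]; grind
    have agree : ∀ F : Fm, Tm.var y ∉ F.ter → ∀ s ∈ F.ter,
        Function.update σ (Tm.var y) (Tm.var y') s = σ s := by
      intro F hF s hs; rw [Function.update_apply]; grind
    have ok' : ∀ s, Function.update σ (Tm.var y) (Tm.var y') s = s ∨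
        (Function.update σ (Tm.var y) (Tm.var y') s ≠ Tm.var x ∧
        Function.update σ (Tm.var y) (Tm.var y') s ∉ bv A) := by
      intro s; have := okσ s
      have := @h2.1.2 (Function.update σ (Tm.var y) (Tm.var y') s); grind
    have := ih _ h1 ⟨h2.1.2, h2.2⟩ okσ Γ' Δ'
    have ea : sub (Fm.all x A) (Function.update σ (Tm.var y) (Tm.var y')) = sub (Fm.all x A) σ :=
      sub_congr _ _ _ (agree _ e3)
    simp only [sub, Fm.all.injEq, true_and] at ea
    have ff := sub_freeFor A x _ _ hf ok'
    simp only [Multiset.map_cons, Multiset.cons_add, sub_subst A x _ _ hf ok'] at this ⊢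
    rw [map_sub_congr fun F hF => agree F (e1 F hF), map_sub_congr fun F hF => agree F (e2 F hF),
      ea, Function.update_self] at this
    rw [ea, Function.update_self] at ff
    exact .allR ff f1 f2 f3 this
  | @exL x y A Γ Δ hf e1 e2 e3 _ ih =>
    intro σ h1 h2 ok Γ' Δ'
    simp only [Multiset.mem_cons, forall_eq_or_imp, bv, bv_subst, Finset.insert_subset_iff] at h1 h2 ih
    obtain ⟨y', hy'⟩ := fresh (B ∪ terM (Γ.map (sub · σ) + Γ') ∪ terM (Δ.map (sub · σ) + Δ') ∪
      (sub (Fm.ex x A) σ).ter)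
    simp only [Finset.mem_union, mem_terM, not_or, not_exists, not_and] at hy'
    obtain ⟨⟨⟨f0, f1⟩, f2⟩, f3⟩ := hy'
    have okσ : ∀ s, Function.update σ (Tm.var y) (Tm.var y') s = s ∨
        Function.update σ (Tm.var y) (Tm.var y') s ∉ B := by
      intro s; rw [Function.update_apply]; grind
    have agree : ∀ F : Fm, Tm.var y ∉ F.ter → ∀ s ∈ F.ter,
        Function.update σ (Tm.var y) (Tm.var y') s = σ s := by
      intro F hF s hs; rw [Function.update_apply]; grind
    have ok' : ∀ s, Function.update σ (Tm.var y) (Tm.var y') s = s ∨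
        (Function.update σ (Tm.var y) (Tm.var y') s ≠ Tm.var x ∧
        Function.update σ (Tm.var y) (Tm.var y') s ∉ bv A) := by
      intro s; have := okσ s
      have := @h1.1.2 (Function.update σ (Tm.var y) (Tm.var y') s); grind
    have := ih _ ⟨h1.1.2, h1.2⟩ h2 okσ Γ' Δ'
    have ea : sub (Fm.ex x A) (Function.update σ (Tm.var y) (Tm.var y')) = sub (Fm.ex x A) σ :=
      sub_congr _ _ _ (agree _ e3)
    simp only [sub, Fm.ex.injEq, true_and] at ea
    have ff := sub_freeFor A x _ _ hf ok'
    simp only [Multiset.map_cons, Multiset.cons_add, sub_subst A x _ _ hf ok'] at this ⊢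
    rw [map_sub_congr fun F hF => agree F (e1 F hF), map_sub_congr fun F hF => agree F (e2 F hF),
      ea, Function.update_self] at this
    rw [ea, Function.update_self] at ff
    exact .exL ff f1 f2 f3 this

/-- all bound variables of a multiset -/
def bvM (Γ : Multiset Fm) : Finset Tm := (Γ.map bv).sup

theorem bv_sub_bvM {Γ : Multiset Fm} {F : Fm} (h : F ∈ Γ) : bv F ⊆ bvM Γ :=
  Multiset.le_sup (Multiset.mem_map_of_mem bv h)

theorem weak {Γ Δ : Multiset Fm} (h : D Γ Δ) (Γ' Δ' : Multiset Fm) : D (Γ + Γ') (Δ + Δ') := by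
  have := ren (bvM Γ ∪ bvM Δ) h id
    (fun F hF => (bv_sub_bvM hF).trans Finset.subset_union_left)
    (fun F hF => (bv_sub_bvM hF).trans Finset.subset_union_right) (fun s => Or.inl rfl) Γ' Δ'
  simpa [sub_id] using this

theorem weakL {Γ Δ : Multiset Fm} (h : D Γ Δ) (A : Fm) : D (A ::ₘ Γ) Δ := by
  simpa [add_comm Γ] using weak h {A} 0

theorem weakR {Γ Δ : Multiset Fm} (h : D Γ Δ) (A : Fm) : D Γ (A ::ₘ Δ) := by
  simpa [add_comm Δ] using weak h 0 {A}

theorem cast {Γ Δ Γ' Δ' : Multiset Fm} (h : D Γ Δ) (e : Γ = Γ') (e' : Δ = Δ') : D Γ' Δ' := by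
  subst e; subst e'; exact h

theorem swL {A B : Fm} {Γ Δ : Multiset Fm} (h : D (A ::ₘ B ::ₘ Γ) Δ) : D (B ::ₘ A ::ₘ Γ) Δ :=
  cast h (Multiset.cons_swap _ _ _) rfl

theorem swR {A B : Fm} {Γ Δ : Multiset Fm} (h : D Γ (A ::ₘ B ::ₘ Δ)) : D Γ (B ::ₘ A ::ₘ Δ) :=
  cast h rfl (Multiset.cons_swap _ _ _)

theorem rotL {A B C : Fm} {Γ Δ : Multiset Fm} (h : D (A ::ₘ B ::ₘ C ::ₘ Γ) Δ) :
    D (B ::ₘ C ::ₘ A ::ₘ Γ) Δ :=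
  cast h (by rw [Multiset.cons_swap A B, Multiset.cons_swap A C]) rfl

theorem rotR {A B C : Fm} {Γ Δ : Multiset Fm} (h : D Γ (A ::ₘ B ::ₘ C ::ₘ Δ)) :
    D Γ (B ::ₘ C ::ₘ A ::ₘ Δ) :=
  cast h rfl (by rw [Multiset.cons_swap A B, Multiset.cons_swap A C])

/-- membership in the language of a pair of multisets -/
def LL (Γ Δ : Multiset Fm) (w : Tm ⊕ ℕ) : Prop := w ∈ langM (Γ + Δ)

theorem LL_L (A Γ Δ w) : LL (A ::ₘ Γ) Δ w ↔ w ∈ A.lang ∨ LL Γ Δ w := by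
  simp [LL, mem_langM]

theorem LL_R (A Γ Δ w) : LL Γ (A ::ₘ Δ) w ↔ w ∈ A.lang ∨ LL Γ Δ w := by
  simp [LL, mem_langM]

theorem LL_inl (Γ Δ s) : LL Γ Δ (Sum.inl s) ↔ (∃ F ∈ Γ, s ∈ F.ter) ∨ ∃ F ∈ Δ, s ∈ F.ter := by
  simp [LL, mem_langM, Fm.lang, or_and_right, exists_or]

theorem lang_and (A B w) : w ∈ (Fm.and A B).lang ↔ w ∈ A.lang ∨ w ∈ B.lang := by
  rcases w with w | w <;> simp [Fm.lang, Fm.ter, Fm.rels]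
theorem lang_or (A B w) : w ∈ (Fm.or A B).lang ↔ w ∈ A.lang ∨ w ∈ B.lang := by
  rcases w with w | w <;> simp [Fm.lang, Fm.ter, Fm.rels]
theorem lang_imp (A B w) : w ∈ (Fm.imp A B).lang ↔ w ∈ A.lang ∨ w ∈ B.lang := by
  rcases w with w | w <;> simp [Fm.lang, Fm.ter, Fm.rels]
theorem lang_bot (w) : w ∉ Fm.bot.lang := by
  rcases w with w | w <;> simp [Fm.lang, Fm.ter, Fm.rels]
theorem lang_inl (A : Fm) (s) : Sum.inl s ∈ A.lang ↔ s ∈ A.ter := by simp [Fm.lang]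
theorem lang_subst_all (A : Fm) (x t w) (h : w ∈ (A.subst (Tm.var x) t).lang) :
    w ∈ (Fm.all x A).lang ∨ w = Sum.inl t := by
  rw [subst_eq_sub] at h
  rcases w with w | w
  · rw [lang_inl] at h
    obtain ⟨s, hs, e⟩ := ter_sub _ _ _ h
    rw [Function.update_apply] at e
    simp only [lang_inl, Fm.ter, Finset.mem_erase]
    grind
  · simp [Fm.lang, rels_sub] at h
    simp [Fm.lang, Fm.rels, h]
theorem lang_all_ex (A : Fm) (x) : (Fm.all x A).lang = (Fm.ex x A).lang := rfl
theorem lang_gen (C : Fm) (z t w) (h : w ∈ (Fm.all z (C.subst t (Tm.var z))).lang) :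
    w ∈ C.lang ∧ w ≠ Sum.inl t := by
  rw [subst_eq_sub] at h
  rcases w with w | w
  · simp only [lang_inl, Fm.ter, Finset.mem_erase] at h
    obtain ⟨s, hs, e⟩ := ter_sub _ _ _ h.2
    rw [Function.update_apply] at e
    simp only [lang_inl]
    grind
  · simpa [Fm.lang, Fm.rels, rels_sub] using h

/-- interpolants -/
def I (Γ₁ Γ₂ Δ₁ Δ₂ : Multiset Fm) (C : Fm) : Prop :=
  D Γ₁ (C ::ₘ Δ₁) ∧ D (C ::ₘ Γ₂) Δ₂ ∧ ∀ w ∈ C.lang, LL Γ₁ Δ₁ w ∧ LL Γ₂ Δ₂ w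

theorem I_symm {Γ₁ Γ₂ Δ₁ Δ₂ : Multiset Fm} (h : ∃ C, I Γ₂ Γ₁ Δ₂ Δ₁ C) : ∃ C, I Γ₁ Γ₂ Δ₁ Δ₂ C := by
  obtain ⟨C, h1, h2, h3⟩ := h
  refine ⟨Fm.imp C Fm.bot, .impR (weakR h2 _), .impL h1 .botL, ?_⟩
  intro w hw
  rw [lang_imp] at hw
  exact (h3 w (hw.resolve_right (lang_bot w))).symm

/-- all partitions have interpolants -/
def P (Γ Δ : Multiset Fm) : Prop :=
  ∀ Γ₁ Γ₂ Δ₁ Δ₂, Γ = Γ₁ + Γ₂ → Δ = Δ₁ + Δ₂ → ∃ C, I Γ₁ Γ₂ Δ₁ Δ₂ C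

theorem split {F : Fm} {Γ Γ₁ Γ₂ : Multiset Fm} (h : F ::ₘ Γ = Γ₁ + Γ₂) :
    (∃ Γ', Γ₁ = F ::ₘ Γ' ∧ Γ = Γ' + Γ₂) ∨ (∃ Γ', Γ₂ = F ::ₘ Γ' ∧ Γ = Γ₁ + Γ') := by
  have : F ∈ Γ₁ + Γ₂ := h ▸ Multiset.mem_cons_self F Γ
  rcases Multiset.mem_add.1 this with h' | h'
  · obtain ⟨Γ', rfl⟩ := Multiset.exists_cons_of_mem h'
    rw [Multiset.cons_add, Multiset.cons_inj_right] at h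
    exact Or.inl ⟨Γ', rfl, h⟩
  · obtain ⟨Γ', rfl⟩ := Multiset.exists_cons_of_mem h'
    rw [Multiset.add_cons, Multiset.cons_inj_right] at h
    exact Or.inr ⟨Γ', rfl, h⟩

theorem P_L {F : Fm} {Γ Δ : Multiset Fm}
    (h : ∀ Γ₁ Γ₂ Δ₁ Δ₂, Γ = Γ₁ + Γ₂ → Δ = Δ₁ + Δ₂ → ∃ C, I (F ::ₘ Γ₁) Γ₂ Δ₁ Δ₂ C) :
    P (F ::ₘ Γ) Δ := by
  intro Γ₁ Γ₂ Δ₁ Δ₂ e e'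
  rcases split e with ⟨Γ', rfl, e2⟩ | ⟨Γ', rfl, e2⟩
  · exact h _ _ _ _ e2 e'
  · exact I_symm (h _ _ _ _ (e2.trans (add_comm _ _)) (e'.trans (add_comm _ _)))

theorem P_R {F : Fm} {Γ Δ : Multiset Fm}
    (h : ∀ Γ₁ Γ₂ Δ₁ Δ₂, Γ = Γ₁ + Γ₂ → Δ = Δ₁ + Δ₂ → ∃ C, I Γ₁ Γ₂ (F ::ₘ Δ₁) Δ₂ C) :
    P Γ (F ::ₘ Δ) := by
  intro Γ₁ Γ₂ Δ₁ Δ₂ e e'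
  rcases split e' with ⟨Γ', rfl, e2⟩ | ⟨Γ', rfl, e2⟩
  · exact h _ _ _ _ e e2
  · exact I_symm (h _ _ _ _ (e.trans (add_comm _ _)) (e2.trans (add_comm _ _)))

theorem gen {Γ₁ Γ₂ Δ₁ Δ₂ : Multiset Fm} {C : Fm} (t : Tm) (h1 : D Γ₁ (C ::ₘ Δ₁))
    (h2 : D (C ::ₘ Γ₂) Δ₂)
    (h3 : ∀ w ∈ C.lang, (LL Γ₁ Δ₁ w ∨ w = Sum.inl t) ∧ LL Γ₂ Δ₂ w) :
    ∃ C, I Γ₁ Γ₂ Δ₁ Δ₂ C := by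
  by_cases ht : LL Γ₁ Δ₁ (Sum.inl t)
  · refine ⟨C, h1, h2, fun w hw => ⟨?_, (h3 w hw).2⟩⟩
    rcases (h3 w hw).1 with h | rfl
    · exact h
    · exact ht
  obtain ⟨z, hz⟩ := fresh (bvM Γ₁ ∪ bvM (C ::ₘ Δ₁) ∪ terM Γ₁ ∪ terM (C ::ₘ Δ₁))
  simp only [Finset.mem_union, mem_terM, not_or, not_exists, not_and] at hz
  obtain ⟨⟨⟨z1, z2⟩, z3⟩, z4⟩ := hz
  have zC : Tm.var z ∉ C.ter := z4 C (Multiset.mem_cons_self _ _)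
  have zb : Tm.var z ∉ bv C := fun h => z2 (bv_sub_bvM (Multiset.mem_cons_self _ _) h)
  rw [LL_inl] at ht
  push Not at ht
  refine ⟨Fm.all z (C.subst t (Tm.var z)), ?_, ?_, ?_⟩
  · have := ren (bvM Γ₁ ∪ bvM (C ::ₘ Δ₁)) h1 (Function.update id t (Tm.var z))
      (fun F hF => (bv_sub_bvM hF).trans Finset.subset_union_left)
      (fun F hF => (bv_sub_bvM hF).trans Finset.subset_union_right)
      (by intro s; rw [Function.update_apply]; simp only [Finset.mem_union, id]; grind) 0 0
    have fixL : Γ₁.map (sub · (Function.update id t (Tm.var z))) = Γ₁ := by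
      conv_rhs => rw [← Multiset.map_id Γ₁]
      refine Multiset.map_congr rfl fun F hF => sub_fix F _ fun s hs => ?_
      have := ht.1 F hF
      rw [Function.update_apply]; grind
    have fixR : Δ₁.map (sub · (Function.update id t (Tm.var z))) = Δ₁ := by
      conv_rhs => rw [← Multiset.map_id Δ₁]
      refine Multiset.map_congr rfl fun F hF => sub_fix F _ fun s hs => ?_
      have := ht.2 F hF
      rw [Function.update_apply]; grind
    rw [add_zero, add_zero, Multiset.map_cons, fixL, fixR, ← subst_eq_sub] at this
    refine .allR (y := z) ?_ z3 (fun F hF => z4 F (Multiset.mem_cons_of_mem hF)) ?_ ?_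
    · exact freeFor_of_bv _ _ _ (by rwa [bv_subst])
    · simp [Fm.ter]
    · rw [subst_eq_sub _ (Tm.var z) (Tm.var z)]
      rw [sub_fix _ _ (by intro s _; rw [Function.update_apply]; simp only [id]; grind)]
      exact this
  · refine .allL (t := t) (freeFor_back C t _ zb zC) ?_
    have : (C.subst t (Tm.var z)).subst (Tm.var z) t = C := by
      rw [subst_eq_sub, subst_eq_sub, sub_sub]
      · apply sub_fix
        intro s hs
        simp only [Function.comp, Function.update_apply, id]
        grind
      · apply NC_of_ok
        intro s; rw [Function.update_apply]; simp only [id]; grind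
    rw [this]
    exact swL (weakL h2 _)
  · intro w hw
    obtain ⟨hw, hn⟩ := lang_gen _ _ _ _ hw
    exact ⟨(h3 w hw).1.resolve_right hn, (h3 w hw).2⟩

theorem orR1 {Γ Δ : Multiset Fm} {C : Fm} (C' : Fm) (h : D Γ (C ::ₘ Δ)) : D Γ (Fm.or C C' ::ₘ Δ) :=
  .orR (swR (weakR h C'))

theorem orR2 {Γ Δ : Multiset Fm} {C' : Fm} (C : Fm) (h : D Γ (C' ::ₘ Δ)) : D Γ (Fm.or C C' ::ₘ Δ) :=
  .orR (weakR h C)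

theorem eig {Γ₁ Γ₂ Δ₁ Δ₂ Γ Δ : Multiset Fm} {y : ℕ} (e : Γ = Γ₁ + Γ₂) (e' : Δ = Δ₁ + Δ₂)
    (h1 : ∀ F ∈ Γ, Tm.var y ∉ F.ter) (h2 : ∀ F ∈ Δ, Tm.var y ∉ F.ter) :
    (∀ F ∈ Γ₁, Tm.var y ∉ F.ter) ∧ (∀ F ∈ Δ₁, Tm.var y ∉ F.ter) ∧
    ¬ LL Γ₂ Δ₂ (Sum.inl (Tm.var y)) := by
  subst e; subst e'
  simp only [Multiset.mem_add] at h1 h2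
  rw [LL_inl]
  grind

theorem main {Γ Δ : Multiset Fm} (h : D Γ Δ) : P Γ Δ := by
  induction h with
  | @ax Q Γ Δ h =>
    apply P_L
    intro Γ₁ Γ₂ Δ₁ Δ₂ e e'
    rcases split e' with ⟨Δ', rfl, e2⟩ | ⟨Δ', rfl, e2⟩
    · exact ⟨Fm.bot, swR (.ax h), .botL, fun w hw => absurd hw (lang_bot w)⟩
    · exact ⟨Q, .ax h, .ax h, fun w hw => by simp [LL_L, LL_R, hw]⟩
  | botL =>
    apply P_L
    intro Γ₁ Γ₂ Δ₁ Δ₂ e e'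
    exact ⟨Fm.bot, .botL, .botL, fun w hw => absurd hw (lang_bot w)⟩
  | topR =>
    apply P_R
    intro Γ₁ Γ₂ Δ₁ Δ₂ e e'
    exact ⟨Fm.bot, swR .topR, .botL, fun w hw => absurd hw (lang_bot w)⟩
  | @andL A B Γ Δ _ ih =>
    apply P_L
    intro Γ₁ Γ₂ Δ₁ Δ₂ e e'
    obtain ⟨C, h1, h2, h3⟩ := ih (A ::ₘ B ::ₘ Γ₁) Γ₂ Δ₁ Δ₂ (by simp [e]) e'
    refine ⟨C, .andL h1, h2, fun w hw => ?_⟩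
    have := h3 w hw
    simp only [LL_L, LL_R, lang_and] at this ⊢; tauto
  | @orR A B Γ Δ _ ih =>
    apply P_R
    intro Γ₁ Γ₂ Δ₁ Δ₂ e e'
    obtain ⟨C, h1, h2, h3⟩ := ih Γ₁ Γ₂ (A ::ₘ B ::ₘ Δ₁) Δ₂ e (by simp [e'])
    refine ⟨C, swR (.orR (rotR h1)), h2, fun w hw => ?_⟩
    have := h3 w hw
    simp only [LL_L, LL_R, lang_or] at this ⊢; tauto
  | @impR A B Γ Δ _ ih =>
    apply P_R
    intro Γ₁ Γ₂ Δ₁ Δ₂ e e'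
    obtain ⟨C, h1, h2, h3⟩ := ih (A ::ₘ Γ₁) Γ₂ (B ::ₘ Δ₁) Δ₂ (by simp [e]) (by simp [e'])
    refine ⟨C, swR (.impR (swR h1)), h2, fun w hw => ?_⟩
    have := h3 w hw
    simp only [LL_L, LL_R, lang_imp] at this ⊢; tauto
  | @andR A B Γ Δ _ _ ih ih' =>
    apply P_R
    intro Γ₁ Γ₂ Δ₁ Δ₂ e e'
    obtain ⟨C, h1, h2, h3⟩ := ih Γ₁ Γ₂ (A ::ₘ Δ₁) Δ₂ e (by simp [e'])
    obtain ⟨C', h1', h2', h3'⟩ := ih' Γ₁ Γ₂ (B ::ₘ Δ₁) Δ₂ e (by simp [e'])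
    refine ⟨Fm.or C C', swR (.andR (swR (orR1 _ h1)) (swR (orR2 _ h1'))), .orL h2 h2',
      fun w hw => ?_⟩
    have := h3 w; have := h3' w
    simp only [LL_L, LL_R, lang_and, lang_or] at *; tauto
  | @orL A B Γ Δ _ _ ih ih' =>
    apply P_L
    intro Γ₁ Γ₂ Δ₁ Δ₂ e e'
    obtain ⟨C, h1, h2, h3⟩ := ih (A ::ₘ Γ₁) Γ₂ Δ₁ Δ₂ (by simp [e]) e'
    obtain ⟨C', h1', h2', h3'⟩ := ih' (B ::ₘ Γ₁) Γ₂ Δ₁ Δ₂ (by simp [e]) e'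
    refine ⟨Fm.or C C', .orL (orR1 _ h1) (orR2 _ h1'), .orL h2 h2', fun w hw => ?_⟩
    have := h3 w; have := h3' w
    simp only [LL_L, LL_R, lang_or] at *; tauto
  | @impL A B Γ Δ _ _ ih ih' =>
    apply P_L
    intro Γ₁ Γ₂ Δ₁ Δ₂ e e'
    obtain ⟨C, h1, h2, h3⟩ := ih Γ₁ Γ₂ (A ::ₘ Δ₁) Δ₂ e (by simp [e'])
    obtain ⟨C', h1', h2', h3'⟩ := ih' (B ::ₘ Γ₁) Γ₂ Δ₁ Δ₂ (by simp [e]) e'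
    refine ⟨Fm.or C C', .impL (swR (orR1 _ h1)) (orR2 _ h1'), .orL h2 h2', fun w hw => ?_⟩
    have := h3 w; have := h3' w
    simp only [LL_L, LL_R, lang_or, lang_imp] at *; tauto
  | @allL x A t Γ Δ hf _ ih =>
    apply P_L
    intro Γ₁ Γ₂ Δ₁ Δ₂ e e'
    obtain ⟨C, h1, h2, h3⟩ := ih (A.subst (Tm.var x) t ::ₘ Fm.all x A ::ₘ Γ₁) Γ₂ Δ₁ Δ₂
      (by simp [e]) e'
    refine gen t (.allL hf h1) h2 fun w hw => ?_
    have := h3 w hw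
    have := lang_subst_all A x t w
    simp only [LL_L, LL_R] at *; tauto
  | @exR x A t Γ Δ hf _ ih =>
    apply P_R
    intro Γ₁ Γ₂ Δ₁ Δ₂ e e'
    obtain ⟨C, h1, h2, h3⟩ := ih Γ₁ Γ₂ (Fm.ex x A ::ₘ A.subst (Tm.var x) t ::ₘ Δ₁) Δ₂
      e (by simp [e'])
    refine gen t (swR (.exR hf (rotR h1))) h2 fun w hw => ?_
    have := h3 w hw
    have := lang_subst_all A x t w
    rw [lang_all_ex] at this
    simp only [LL_L, LL_R] at *; tauto
  | @allR x y A Γ Δ hf e1 e2 e3 _ ih =>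
    apply P_R
    intro Γ₁ Γ₂ Δ₁ Δ₂ e e'
    obtain ⟨C, h1, h2, h3⟩ := ih Γ₁ Γ₂ (A.subst (Tm.var x) (Tm.var y) ::ₘ Δ₁) Δ₂
      e (by simp [e'])
    obtain ⟨y1, y2, y3⟩ := eig e e' e1 e2
    have yC : Tm.var y ∉ C.ter := fun h => y3 (h3 _ ((lang_inl _ _).2 h)).2
    refine ⟨C, swR (.allR hf y1 ?_ e3 (swR h1)), h2, fun w hw => ?_⟩
    · simpa [yC] using y2
    · have := h3 w hw
      have := lang_subst_all A x (Tm.var y) w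
      have : w ≠ Sum.inl (Tm.var y) := by rintro rfl; exact yC ((lang_inl _ _).1 hw)
      simp only [LL_L, LL_R] at *; tauto
  | @exL x y A Γ Δ hf e1 e2 e3 _ ih =>
    apply P_L
    intro Γ₁ Γ₂ Δ₁ Δ₂ e e'
    obtain ⟨C, h1, h2, h3⟩ := ih (A.subst (Tm.var x) (Tm.var y) ::ₘ Γ₁) Γ₂ Δ₁ Δ₂
      (by simp [e]) e'
    obtain ⟨y1, y2, y3⟩ := eig e e' e1 e2
    have yC : Tm.var y ∉ C.ter := fun h => y3 (h3 _ ((lang_inl _ _).2 h)).2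
    refine ⟨C, .exL hf y1 ?_ e3 h1, h2, fun w hw => ?_⟩
    · simpa [yC] using y2
    · have := h3 w hw
      have := lang_subst_all A x (Tm.var y) w
      have : w ≠ Sum.inl (Tm.var y) := by rintro rfl; exact yC ((lang_inl _ _).1 hw)
      rw [lang_all_ex] at *
      simp only [LL_L, LL_R] at *; tauto

end Mae

/-- Maehara's lemma for G: every partition Γ₁;Γ₂⇒Δ₁;Δ₂ of a
derivable sequent has a split-interpolant C: Γ₁⇒Δ₁,C and C,Γ₂⇒Δ₂ are
derivable in G and L(C) ⊆ L(Γ₁,Δ₁) ∩ L(Γ₂,Δ₂). -/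
theorem maehara_G (Γ₁ Γ₂ Δ₁ Δ₂ : Multiset Fm)
    (hder : Derivable ∅ (Γ₁ + Γ₂) (Δ₁ + Δ₂)) :
    ∃ C : Fm, SplitInterpolant ∅ Γ₁ Γ₂ Δ₁ Δ₂ C := by
  obtain ⟨n, h⟩ := hder
  obtain ⟨C, h1, h2, h3⟩ := Mae.main (Mae.D_of h) Γ₁ Γ₂ Δ₁ Δ₂ rfl rfl
  exact ⟨C, Mae.of_D h1, Mae.of_D h2, fun w hw => Finset.mem_inter.2 (h3 w hw)⟩
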